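/- Extremal points of the set of trace-one three-outcome qutrit POVMs are rank-one projective measurements: if M = (M_1, M_2, M_3) is a POVM on ℂ³ with tr(M_i) = 1 for all i, and M is extremal in the convex set of such POVMs, then each M_i = |ψ_i⟩⟨ψ_i| for an orthonormal basis {ψ_1, ψ_2, ψ_3} of ℂ³. Equivalently, every trace-one three-outcome qutrit POVM is a convex combination of rank-one projective measurements. -/

import Mathlib

open scoped ComplexOrder
open Matrix

/-- An `n`-outcome POVM on `ℂ^d`. -/
def IsPOVM {d n : ℕ} (M : Fin n → Matrix (Fin d) (Fin d) ℂ) : Prop :=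
  (∀ i, (M i).PosSemidef) ∧ ∑ i, M i = 1

/-- The set `P₁(3,3)` of three-outcome qutrit POVMs with trace-one effects. -/
def P1 : Set (Fin 3 → Matrix (Fin 3) (Fin 3) ℂ) :=
  {M | IsPOVM M ∧ ∀ i, (M i).trace = 1}

/-- Rank-one projective measurements on `ℂ³`: POVMs whose effects are
rank-one orthogonal projections (equivalently, trace-one projections). -/
def RankOneProjective : Set (Fin 3 → Matrix (Fin 3) (Fin 3) ℂ) :=
  {P | IsPOVM P ∧ ∀ i, (P i).IsHermitian ∧ P i * P i = P i ∧ (P i).trace = 1}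


/-- A rank-one projection onto a unit vector. -/
def IsPure (M : Matrix (Fin 3) (Fin 3) ℂ) (ψ : Fin 3 → ℂ) : Prop :=
  star ψ ⬝ᵥ ψ = 1 ∧ M = vecMulVec ψ (star ψ)

/-- `M` dominates a positive multiple of a rank-two projection. -/
def IsMixed (M : Matrix (Fin 3) (Fin 3) ℂ) (V : Matrix (Fin 3) (Fin 2) ℂ) (c : ℝ) : Prop :=
  Vᴴ * V = 1 ∧ 0 < c ∧ (M - (c : ℂ) • (V * Vᴴ)).PosSemidef

lemma pure_or_mixed (M : Matrix (Fin 3) (Fin 3) ℂ) (hM : M.PosSemidef) (ht : M.trace = 1) :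
    (∃ ψ, IsPure M ψ) ∨ ∃ V c, IsMixed M V c := by
  have hH := hM.isHermitian
  obtain ⟨U, l, hU1, hl0, hl1, hMU⟩ : ∃ (U : Matrix (Fin 3) (Fin 3) ℂ) (l : Fin 3 → ℝ),
      Uᴴ * U = 1 ∧ (∀ i, 0 ≤ l i) ∧ ∑ i, l i = 1 ∧
      M = U * diagonal (fun i => (l i : ℂ)) * Uᴴ := by
    refine ⟨hH.eigenvectorUnitary, hH.eigenvalues, ?_, hM.eigenvalues_nonneg, ?_, ?_⟩
    · exact Unitary.coe_star_mul_self hH.eigenvectorUnitary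
    · have := hH.trace_eq_sum_eigenvalues
      rw [ht] at this
      apply Complex.ofReal_injective
      push_cast
      exact this.symm
    · have := hH.spectral_theorem
      rw [Unitary.conjStarAlgAut_apply] at this
      exact this
  by_cases h : ∃ i j, i ≠ j ∧ 0 < l i ∧ 0 < l j
  · right
    obtain ⟨i, j, hij, hi, hj⟩ := h
    refine ⟨U.submatrix id ![i, j], min (l i) (l j), ?_, lt_min hi hj, ?_⟩
    · have h2 : (Uᴴ * U).submatrix ![i, j] ![i, j] = 1 := by
        rw [hU1]
        ext a b
        fin_cases a <;> fin_cases b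
        · exact Matrix.one_apply_eq i
        · exact Matrix.one_apply_ne hij
        · exact Matrix.one_apply_ne hij.symm
        · exact Matrix.one_apply_eq j
      rw [← h2]
      ext a b
      simp only [Matrix.mul_apply, submatrix_apply, conjTranspose_apply, id]
    · have h3 : M - ((min (l i) (l j) : ℝ) : ℂ) • (U.submatrix id ![i, j] * (U.submatrix id ![i, j])ᴴ)
          = U * diagonal (fun k => (((if k = i ∨ k = j then l k - min (l i) (l j) else l k : ℝ)) : ℂ)) * Uᴴ := by
        rw [hMU]
        ext a b
        simp only [Matrix.sub_apply, Matrix.smul_apply, Matrix.mul_apply, Matrix.mul_diagonal,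
          conjTranspose_apply, submatrix_apply, Fin.sum_univ_three, Fin.sum_univ_two]
        fin_cases i <;> fin_cases j <;> simp at hij ⊢ <;> ring
      rw [h3]
      refine PosSemidef.mul_mul_conjTranspose_same (PosSemidef.diagonal ?_) U
      intro k
      simp only [Pi.zero_apply]
      norm_cast
      split_ifs with hk
      · rcases hk with rfl | rfl
        · linarith [min_le_left (l k) (l j)]
        · linarith [min_le_right (l i) (l k)]
      · exact hl0 k
  · left
    push Not at h
    obtain ⟨j, hj⟩ : ∃ j, 0 < l j := by
      by_contra hc
      push Not at hc
      have : ∑ i, l i ≤ 0 := Finset.sum_nonpos fun i _ => hc i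
      linarith
    have hz : ∀ i, i ≠ j → l i = 0 := fun i hi => le_antisymm (h j i hi.symm hj) (hl0 i)
    have hj1 : l j = 1 := by
      rw [← hl1]
      exact (Finset.sum_eq_single j (fun i _ hi => hz i hi) (by simp)).symm
    refine ⟨fun i => U i j, ?_, ?_⟩
    · have := congrFun (congrFun hU1 j) j
      simpa [Matrix.mul_apply, dotProduct] using this
    · rw [hMU]
      ext a b
      rw [Matrix.mul_apply, Finset.sum_eq_single j]
      · simp [Matrix.mul_diagonal, hj1, vecMulVec_apply]
      · intro k _ hk
        simp [Matrix.mul_diagonal, hz k hk]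
      · simp

/-- Traceless Hermitian 2×2 matrices, parametrised by `ℝ³`. -/
def pauli (v : Fin 3 → ℝ) : Matrix (Fin 2) (Fin 2) ℂ :=
  !![(v 0 : ℂ), v 1 + v 2 * Complex.I; v 1 - v 2 * Complex.I, -v 0]

lemma pauli_herm (v : Fin 3 → ℝ) : (pauli v)ᴴ = pauli v := by
  ext a b
  fin_cases a <;> fin_cases b <;> simp [pauli] <;> ring

lemma pauli_trace (v : Fin 3 → ℝ) : (pauli v).trace = 0 := by
  simp [pauli, Matrix.trace_fin_two]

lemma pauli_sq (v : Fin 3 → ℝ) :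
    pauli v * pauli v = ((v 0 ^ 2 + v 1 ^ 2 + v 2 ^ 2 : ℝ) : ℂ) • (1 : Matrix (Fin 2) (Fin 2) ℂ) := by
  ext a b
  fin_cases a <;> fin_cases b <;> simp [pauli, Matrix.mul_apply, Fin.sum_univ_two] <;> ring_nf <;>
    simp <;> ring

lemma pauli_eq_zero (v : Fin 3 → ℝ) (h : pauli v = 0) : v = 0 := by
  have h0 := congrFun (congrFun h 0) 0
  have h1 := congrFun (congrFun h 0) 1
  simp [pauli, Complex.ext_iff] at h0 h1
  ext i
  fin_cases i <;> simp [h0, h1]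

lemma pauli_neg (v : Fin 3 → ℝ) : pauli (-v) = -pauli v := by
  ext a b
  fin_cases a <;> fin_cases b <;> simp [pauli] <;> ring

lemma perturb_aux (M : Matrix (Fin 3) (Fin 3) ℂ) (V : Matrix (Fin 3) (Fin 2) ℂ) (c : ℝ)
    (h : (M - (c : ℂ) • (V * Vᴴ)).PosSemidef) (v : Fin 3 → ℝ) (t : ℝ) (ht : 0 ≤ t)
    (htc : t * (1 + (v 0 ^ 2 + v 1 ^ 2 + v 2 ^ 2)) ≤ c) :
    (M + (t : ℂ) • (V * pauli v * Vᴴ)).PosSemidef := by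
  set r := v 0 ^ 2 + v 1 ^ 2 + v 2 ^ 2 with hr
  have hr0 : 0 ≤ r := by positivity
  have h1 : ((1 + pauli v)ᴴ * (1 + pauli v)).PosSemidef := posSemidef_conjTranspose_mul_self _
  have h1' : (1 + pauli v)ᴴ * (1 + pauli v) = ((1 + r : ℝ) : ℂ) • (1 : Matrix (Fin 2) (Fin 2) ℂ) + (2 : ℂ) • pauli v := by
    rw [conjTranspose_add, pauli_herm, conjTranspose_one, Matrix.add_mul, Matrix.mul_add, Matrix.mul_add, pauli_sq, ← hr]
    push_cast
    simp only [Matrix.one_mul, Matrix.mul_one]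
    module
  rw [h1'] at h1
  have h2 := (h1.mul_mul_conjTranspose_same V).smul (a := ((t / 2 : ℝ) : ℂ)) (by
    have : 0 ≤ t / 2 := by linarith
    exact_mod_cast this)
  have h3 := (posSemidef_self_mul_conjTranspose V).smul (a := ((c - t / 2 * (1 + r) : ℝ) : ℂ)) (by
    have : 0 ≤ c - t / 2 * (1 + r) := by nlinarith
    exact_mod_cast this)
  have := (h.add h3).add h2
  convert this using 1
  simp only [Matrix.mul_add, Matrix.add_mul, Matrix.mul_smul, Matrix.smul_mul, Matrix.mul_one]
  push_cast
  module

lemma perturb (M : Matrix (Fin 3) (Fin 3) ℂ) (V : Matrix (Fin 3) (Fin 2) ℂ) (c : ℝ)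
    (hc : 0 < c)
    (h : (M - (c : ℂ) • (V * Vᴴ)).PosSemidef) (v : Fin 3 → ℝ) :
    ∃ ε : ℝ, 0 < ε ∧ ∀ t : ℝ, 0 ≤ t → t ≤ ε → (M + (t : ℂ) • (V * pauli v * Vᴴ)).PosSemidef ∧
      (M - (t : ℂ) • (V * pauli v * Vᴴ)).PosSemidef := by
  have hr0 : 0 < 1 + (v 0 ^ 2 + v 1 ^ 2 + v 2 ^ 2) := by positivity
  refine ⟨c / (1 + (v 0 ^ 2 + v 1 ^ 2 + v 2 ^ 2)), by positivity, fun t ht hte => ?_⟩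
  rw [le_div_iff₀ hr0] at hte
  refine ⟨perturb_aux M V c h v t ht hte, ?_⟩
  have := perturb_aux M V c h (-v) t ht (by simpa using hte)
  rw [pauli_neg] at this
  simpa [sub_eq_add_neg] using this

lemma extreme_zero (M X : Fin 3 → Matrix (Fin 3) (Fin 3) ℂ) (hM : M ∈ Set.extremePoints ℝ P1)
    (hX : ∑ i, X i = 0) (htr : ∀ i, (X i).trace = 0) (hp : ∀ i, (M i + X i).PosSemidef)
    (hm : ∀ i, (M i - X i).PosSemidef) : X = 0 := by
  obtain ⟨⟨⟨_, h1⟩, h2⟩, h3⟩ := hM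
  have ha : M + X ∈ P1 := ⟨⟨hp, by simp [Finset.sum_add_distrib, hX, h1]⟩, by simp [h2, htr]⟩
  have hb : M - X ∈ P1 := ⟨⟨hm, by simp [Finset.sum_sub_distrib, hX, h1]⟩, by simp [h2, htr]⟩
  have := h3 ha hb ⟨1/2, 1/2, by norm_num, by norm_num, by norm_num, by
    module⟩
  simpa using this

lemma trace_conj (V : Matrix (Fin 3) (Fin 2) ℂ) (hV : Vᴴ * V = 1) (v) :
    (V * pauli v * Vᴴ).trace = 0 := by
  rw [Matrix.trace_mul_comm, ← Matrix.mul_assoc, hV, Matrix.one_mul, pauli_trace]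

lemma conj_eq_zero (V : Matrix (Fin 3) (Fin 2) ℂ) (hV : Vᴴ * V = 1) (v)
    (h : V * pauli v * Vᴴ = 0) : v = 0 := by
  apply pauli_eq_zero
  calc pauli v = (Vᴴ * V) * pauli v * (Vᴴ * V) := by rw [hV]; simp
    _ = Vᴴ * (V * pauli v * Vᴴ) * V := by simp only [Matrix.mul_assoc]
    _ = 0 := by rw [h]; simp

/-- Eight real coordinates of a traceless Hermitian matrix. -/
def coords : Matrix (Fin 3) (Fin 3) ℂ →ₗ[ℝ] (ℝ × ℝ × ℂ × ℂ × ℂ) where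
  toFun A := ((A 0 0).re, (A 1 1).re, A 0 1, A 0 2, A 1 2)
  map_add' A B := by simp
  map_smul' r A := by simp

lemma coords_eq_zero (A : Matrix (Fin 3) (Fin 3) ℂ) (hA : Aᴴ = A) (ht : A.trace = 0)
    (h : coords A = 0) : A = 0 := by
  have h0 : (A 0 0).re = 0 := congrArg (fun p => p.1) h
  have h1 : (A 1 1).re = 0 := congrArg (fun p => p.2.1) h
  have h2 : A 0 1 = 0 := congrArg (fun p => p.2.2.1) h
  have h3 : A 0 2 = 0 := congrArg (fun p => p.2.2.2.1) h
  have h4 : A 1 2 = 0 := congrArg (fun p => p.2.2.2.2) h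
  have e : ∀ i j, star (A j i) = A i j := fun i j => congrFun (congrFun hA i) j
  have d : ∀ i, (A i i).im = 0 := fun i => by
    have := congrArg Complex.im (e i i)
    simp at this
    linarith
  have z0 : A 0 0 = 0 := Complex.ext h0 (d 0)
  have z1 : A 1 1 = 0 := Complex.ext h1 (d 1)
  have z2 : A 2 2 = 0 := by simpa [Matrix.trace_fin_three, z0, z1] using ht
  ext i j
  fin_cases i <;> fin_cases j <;> simp [z0, z1, z2, h2, h3, h4]
  · rw [← e, h2]; simp
  · rw [← e, h3]; simp
  · rw [← e, h4]; simp

lemma all_mixed (M : Fin 3 → Matrix (Fin 3) (Fin 3) ℂ) (hM : M ∈ Set.extremePoints ℝ P1)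
    (h : ∀ i, ∃ V c, IsMixed (M i) V c) : False := by
  choose V c hV hc hp using h
  let L : (Fin 3 → Fin 3 → ℝ) →ₗ[ℝ] Matrix (Fin 3) (Fin 3) ℂ :=
    { toFun := fun v => ∑ i, V i * pauli (v i) * (V i)ᴴ
      map_add' := by
        intro v w
        rw [← Finset.sum_add_distrib]
        refine Finset.sum_congr rfl fun i _ => ?_
        rw [← Matrix.add_mul, ← Matrix.mul_add]
        congr 2
        ext a b
        fin_cases a <;> fin_cases b <;> simp [pauli] <;> ring
      map_smul' := by
        intro r v
        rw [Finset.smul_sum]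
        refine Finset.sum_congr rfl fun i _ => ?_
        rw [RingHom.id_apply, ← Matrix.smul_mul, ← Matrix.mul_smul]
        congr 2
        ext a b
        fin_cases a <;> fin_cases b <;> simp [pauli] <;> ring }
  have hk : LinearMap.ker (coords ∘ₗ L) ≠ ⊥ := by
    apply LinearMap.ker_ne_bot_of_finrank_lt
    simp [Module.finrank_prod, Module.finrank_pi_fintype, Complex.finrank_real_complex]
  obtain ⟨v, hv, hv0⟩ := (Submodule.ne_bot_iff _).1 hk
  have hL : ∑ i, V i * pauli (v i) * (V i)ᴴ = 0 := by
    apply coords_eq_zero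
    · rw [conjTranspose_sum]
      refine Finset.sum_congr rfl fun i _ => ?_
      simp [conjTranspose_mul, pauli_herm, Matrix.mul_assoc]
    · rw [trace_sum]
      exact Finset.sum_eq_zero fun i _ => trace_conj _ (hV i) _
    · exact hv
  choose ε hε hεp using fun i => perturb (M i) (V i) (c i) (hc i) (hp i) (v i)
  let t := min (ε 0) (min (ε 1) (ε 2))
  have ht : 0 < t := lt_min (hε 0) (lt_min (hε 1) (hε 2))
  have hte : ∀ i, t ≤ ε i := by
    intro i
    fin_cases i <;> simp [t]
  have := extreme_zero M (fun i => (t : ℂ) • (V i * pauli (v i) * (V i)ᴴ)) hM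
    (by rw [← Finset.smul_sum, hL, smul_zero])
    (fun i => by rw [trace_smul, trace_conj _ (hV i), smul_zero])
    (fun i => (hεp i t ht.le (hte i)).1) (fun i => (hεp i t ht.le (hte i)).2)
  apply hv0
  funext i
  apply conj_eq_zero (V i) (hV i)
  have h2 := congrFun this i
  simpa [ht.ne'] using h2

lemma quad_pure (φ ψ : Fin 3 → ℂ) :
    star ψ ⬝ᵥ (vecMulVec φ (star φ) *ᵥ ψ) = star (star φ ⬝ᵥ ψ) * (star φ ⬝ᵥ ψ) := by
  simp [dotProduct, Matrix.mulVec, vecMulVec_apply, Fin.sum_univ_three]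
  ring

lemma quad_zero (P Q : Matrix (Fin 3) (Fin 3) ℂ) (ψ : Fin 3 → ℂ) (hψ : star ψ ⬝ᵥ ψ = 1)
    (hP : P.PosSemidef) (hQ : Q.PosSemidef) (h : vecMulVec ψ (star ψ) + P + Q = 1) :
    star ψ ⬝ᵥ (P *ᵥ ψ) = 0 := by
  have h1 := hP.dotProduct_mulVec_nonneg ψ
  have h2 := hQ.dotProduct_mulVec_nonneg ψ
  have h3 : star ψ ⬝ᵥ ((vecMulVec ψ (star ψ) + P + Q) *ᵥ ψ) = 1 := by rw [h]; simp [hψ]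
  rw [Matrix.add_mulVec, Matrix.add_mulVec, dotProduct_add, dotProduct_add, quad_pure, hψ] at h3
  have h4 : star ψ ⬝ᵥ P *ᵥ ψ = - (star ψ ⬝ᵥ Q *ᵥ ψ) := by
    simp at h3
    linear_combination h3
  refine le_antisymm ?_ h1
  rw [h4]
  exact neg_nonpos.2 h2

lemma mixed_orth (M : Matrix (Fin 3) (Fin 3) ℂ) (V c) (h : IsMixed M V c) (ψ : Fin 3 → ℂ)
    (hψ : star ψ ⬝ᵥ (M *ᵥ ψ) = 0) : Vᴴ *ᵥ ψ = 0 := by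
  obtain ⟨_, hc, hp⟩ := h
  have h1 := hp.dotProduct_mulVec_nonneg ψ
  have h2 : star ψ ⬝ᵥ ((V * Vᴴ) *ᵥ ψ) = star (Vᴴ *ᵥ ψ) ⬝ᵥ (Vᴴ *ᵥ ψ) := by
    rw [← Matrix.mulVec_mulVec, Matrix.dotProduct_mulVec, Matrix.star_mulVec,
      conjTranspose_conjTranspose]
  rw [Matrix.sub_mulVec, dotProduct_sub, hψ, Matrix.smul_mulVec, dotProduct_smul, h2] at h1
  have h3 : 0 ≤ star (Vᴴ *ᵥ ψ) ⬝ᵥ (Vᴴ *ᵥ ψ) := dotProduct_star_self_nonneg _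
  apply dotProduct_star_self_eq_zero.1
  have hc' : (0 : ℂ) < c := by exact_mod_cast hc
  rw [zero_sub, smul_eq_mul, neg_nonneg] at h1
  have h5 := le_antisymm h1 (mul_nonneg hc'.le h3)
  exact (mul_eq_zero.1 h5).resolve_left hc'.ne'

lemma complete (V : Matrix (Fin 3) (Fin 2) ℂ) (ψ : Fin 3 → ℂ) (hV : Vᴴ * V = 1)
    (h0 : Vᴴ *ᵥ ψ = 0) (hψ : star ψ ⬝ᵥ ψ = 1) : V * Vᴴ + vecMulVec ψ (star ψ) = 1 := by
  let W : Matrix (Fin 3) (Fin 2 ⊕ Fin 1) ℂ := fromCols V (replicateCol (Fin 1) ψ)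
  have hW : Wᴴ * W = 1 := by
    have e1 : Vᴴ * replicateCol (Fin 1) ψ = 0 := by
      ext a b; exact congrFun h0 a
    have e2 : (replicateCol (Fin 1) ψ)ᴴ * V = 0 := by
      have := congrArg conjTranspose e1
      simpa [conjTranspose_mul] using this
    have e3 : (replicateCol (Fin 1) ψ)ᴴ * replicateCol (Fin 1) ψ = 1 := by
      ext a b
      have : a = b := Subsingleton.elim _ _
      subst this
      simpa [Matrix.mul_apply, dotProduct] using hψ
    simp only [W]
    rw [conjTranspose_fromCols_eq_fromRows_conjTranspose, fromRows_mul_fromCols, hV, e1, e2, e3,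
      fromBlocks_one]
  have hW2 : W * Wᴴ = 1 := (Matrix.mul_eq_one_comm_of_equiv finSumFinEquiv).1 hW
  rw [← hW2]
  simp only [W]
  rw [conjTranspose_fromCols_eq_fromRows_conjTranspose, fromCols_mul_fromRows]
  congr 1
  ext a b
  simp [Matrix.mul_apply, vecMulVec_apply]

lemma third (i j : Fin 3) (h : i ≠ j) :
    ∃ k, i ≠ k ∧ j ≠ k ∧ (Finset.univ : Finset (Fin 3)) = {i, j, k} := by
  revert i j
  decide

lemma not_some_mixed (M : Fin 3 → Matrix (Fin 3) (Fin 3) ℂ) (hM : M ∈ Set.extremePoints ℝ P1)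
    (i j : Fin 3) (ψ) (hi : IsPure (M i) ψ) (V c) (hj : IsMixed (M j) V c) (hij : i ≠ j) :
    False := by
  obtain ⟨k, hik, hjk, hu⟩ := third i j hij
  have hsum : ∀ f : Fin 3 → Matrix (Fin 3) (Fin 3) ℂ, ∑ l, f l = f i + f j + f k := by
    intro f
    rw [hu, Finset.sum_insert (by simp [hij, hik]), Finset.sum_insert (by simp [hjk]),
      Finset.sum_singleton, add_assoc]
  have hpsd := hM.1.1.1
  have h1 := hM.1.1.2
  rw [hsum, hi.2] at h1
  have hVψ := mixed_orth _ V c hj ψ (quad_zero _ _ ψ hi.1 (hpsd j) (hpsd k) h1)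
  have hC := complete V ψ hj.1 hVψ hi.1
  have h1' : vecMulVec ψ (star ψ) + M k + M j = 1 := by rw [← h1]; abel
  have hkψ := quad_zero _ _ ψ hi.1 (hpsd k) (hpsd j) h1'
  rcases pure_or_mixed (M k) (hpsd k) (hM.1.2 k) with ⟨φ, hφ⟩ | ⟨V', c', hV'⟩
  · rw [hφ.2, quad_pure] at hkψ
    have hφψ : star φ ⬝ᵥ ψ = 0 := by simpa using hkψ
    have hψφ : star ψ ⬝ᵥ φ = 0 := by
      have : star ψ ⬝ᵥ φ = star (star φ ⬝ᵥ ψ) := by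
        simp [dotProduct, Fin.sum_univ_three]
        ring
      rw [this, hφψ, star_zero]
    have h2 : vecMulVec φ (star φ) + M j + M i = 1 := by rw [← h1, ← hφ.2, ← hi.2]; abel
    have hVφ := mixed_orth _ V c hj φ (quad_zero _ _ φ hφ.1 (hpsd j) (hpsd i) h2)
    have h3 : φ = 0 := by
      calc φ = (V * Vᴴ + vecMulVec ψ (star ψ)) *ᵥ φ := by rw [hC]; simp
        _ = 0 := by
          rw [Matrix.add_mulVec, ← Matrix.mulVec_mulVec, hVφ, vecMulVec_mulVec, hψφ]; simp
    have := hφ.1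
    simp [h3] at this
  · have hC' := complete V' ψ hV'.1 (mixed_orth _ V' c' hV' ψ hkψ) hi.1
    have hVV : V' * V'ᴴ = V * Vᴴ := add_right_cancel (hC'.trans hC.symm)
    have hk := hV'.2.2
    rw [hVV] at hk
    obtain ⟨ε, hε, hεp⟩ := perturb (M j) V c hj.2.1 hj.2.2 ![1, 0, 0]
    obtain ⟨ε', hε', hεp'⟩ := perturb (M k) V c' hV'.2.1 hk ![1, 0, 0]
    have ht : 0 < min ε ε' := lt_min hε hε'
    obtain ⟨pj, mj⟩ := hεp _ ht.le (min_le_left _ _)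
    obtain ⟨pk, mk⟩ := hεp' _ ht.le (min_le_right _ _)
    have hY : ((min ε ε' : ℝ) : ℂ) • (V * pauli ![1, 0, 0] * Vᴴ) ≠ 0 := by
      intro h0
      have h0' : V * pauli ![1, 0, 0] * Vᴴ = 0 :=
        (smul_eq_zero.1 h0).resolve_left (by exact_mod_cast ht.ne')
      have := congrFun (conj_eq_zero V hj.1 _ h0') 0
      simp at this
    have htY : (((min ε ε' : ℝ) : ℂ) • (V * pauli ![1, 0, 0] * Vᴴ)).trace = 0 := by
      rw [trace_smul, trace_conj _ hj.1, smul_zero]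
    generalize ((min ε ε' : ℝ) : ℂ) • (V * pauli ![1, 0, 0] * Vᴴ) = Y at *
    have hall : ∀ l, l = i ∨ l = j ∨ l = k := by
      intro l
      have : l ∈ (Finset.univ : Finset (Fin 3)) := Finset.mem_univ l
      rw [hu] at this
      simpa using this
    have := extreme_zero M (fun l => if l = j then Y else if l = k then -Y else 0) hM
      (by rw [hsum]; simp [hij, hik, hjk.symm])
      (by intro l; split_ifs <;> simp [htY])
      (by
        intro l
        rcases hall l with rfl | rfl | rfl
        · simpa [hij, hik] using hpsd l
        · simpa using pj
        · simpa [hjk.symm, ← sub_eq_add_neg] using mk)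
      (by
        intro l
        rcases hall l with rfl | rfl | rfl
        · simpa [hij, hik] using hpsd l
        · simpa using mj
        · simpa [hjk.symm] using pk)
    have h4 := congrFun this j
    simp at h4
    exact hY h4

lemma extreme_pure (M : Fin 3 → Matrix (Fin 3) (Fin 3) ℂ) (hM : M ∈ Set.extremePoints ℝ P1) :
    ∃ ψ : Fin 3 → (Fin 3 → ℂ),
        (∀ i j, star (ψ i) ⬝ᵥ ψ j = if i = j then 1 else 0) ∧
        ∀ i, M i = Matrix.vecMulVec (ψ i) (star (ψ i)) := by
  have hd := fun i => pure_or_mixed (M i) (hM.1.1.1 i) (hM.1.2 i)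
  have hall : ∀ i, ∃ ψ, IsPure (M i) ψ := by
    by_contra hc
    push Not at hc
    obtain ⟨j, hj⟩ := hc
    obtain ⟨V, c, hV⟩ := (hd j).resolve_left (by push Not; exact hj)
    apply all_mixed M hM
    intro i
    rcases hd i with ⟨ψ, hi⟩ | h
    · exfalso
      refine not_some_mixed M hM i j ψ hi V c hV ?_
      rintro rfl
      exact hj _ hi
    · exact h
  choose ψ hψ using hall
  refine ⟨ψ, ?_, fun i => (hψ i).2⟩
  intro i j
  split_ifs with h
  · subst h; exact (hψ i).1
  · obtain ⟨k, hik, hjk, hu⟩ := third i j h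
    have h1 := hM.1.1.2
    rw [hu, Finset.sum_insert (by simp [h, hik]), Finset.sum_insert (by simp [hjk]),
      Finset.sum_singleton] at h1
    have h2 := quad_zero (M i) (M k) (ψ j) (hψ j).1 (hM.1.1.1 i) (hM.1.1.1 k) (by
      rw [← (hψ j).2, ← h1]; abel)
    rw [(hψ i).2, quad_pure] at h2
    simpa using h2

lemma extreme_sub : Set.extremePoints ℝ P1 ⊆ RankOneProjective := by
  intro M hM
  obtain ⟨ψ, h1, h2⟩ := extreme_pure M hM
  refine ⟨hM.1.1, fun i => ⟨(hM.1.1.1 i).isHermitian, ?_, hM.1.2 i⟩⟩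
  rw [h2 i, vecMulVec_mul_vecMulVec, h1]
  simp

lemma compact_convexHull {E : Type*} [AddCommGroup E] [Module ℝ E] [TopologicalSpace E]
    [IsTopologicalAddGroup E] [ContinuousSMul ℝ E] [FiniteDimensional ℝ E] {s : Set E}
    (hs : IsCompact s) : IsCompact (convexHull ℝ s) := by
  have key : convexHull ℝ s = ⋃ n ∈ Finset.range (Module.finrank ℝ E + 2),
      (fun p : (Fin n → ℝ) × (Fin n → E) => ∑ i, p.1 i • p.2 i) ''
        (stdSimplex ℝ (Fin n) ×ˢ Set.pi Set.univ (fun _ => s)) := by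
    apply Set.Subset.antisymm
    · intro x hx
      obtain ⟨ι, _, z, w, hz, hai, hw, hw1, hx⟩ := eq_pos_convex_span_of_mem_convexHull hx
      have hcard : Fintype.card ι ≤ Module.finrank ℝ E + 1 := by
        refine hai.card_le_finrank_succ.trans ?_
        gcongr
        exact Submodule.finrank_le _
      let e := (Fintype.equivFin ι).symm
      refine Set.mem_iUnion₂.2 ⟨Fintype.card ι, by simp; omega, (w ∘ e, z ∘ e), ⟨⟨?_, ?_⟩, ?_⟩, ?_⟩
      · intro i; exact (hw _).le
      · rw [← hw1]; exact e.sum_comp w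
      · intro i _; exact hz ⟨_, rfl⟩
      · rw [← hx]; exact e.sum_comp (fun i => w i • z i)
    · refine Set.iUnion₂_subset fun n _ => ?_
      rintro _ ⟨⟨w, z⟩, ⟨⟨hw, hw1⟩, hz⟩, rfl⟩
      exact (convex_convexHull ℝ s).sum_mem (fun i _ => hw i) hw1
        (fun i _ => subset_convexHull ℝ s (hz i trivial))
  rw [key]
  refine Finset.isCompact_biUnion _ fun n _ => ?_
  refine ((isCompact_stdSimplex ℝ (Fin n)).prod (isCompact_univ_pi fun _ => hs)).image ?_
  fun_prop

lemma psd_closed : IsClosed {A : Matrix (Fin 3) (Fin 3) ℂ | A.PosSemidef} := by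
  have : {A : Matrix (Fin 3) (Fin 3) ℂ | A.PosSemidef} =
      {A | Aᴴ = A} ∩ ⋂ x : Fin 3 → ℂ, {A | 0 ≤ star x ⬝ᵥ (A *ᵥ x)} := by
    ext A
    simp [posSemidef_iff_dotProduct_mulVec, Matrix.IsHermitian]
  rw [this]
  refine (isClosed_eq (by fun_prop) (by fun_prop)).inter (isClosed_iInter fun x => ?_)
  exact isClosed_le (by fun_prop) (by fun_prop)

lemma psd_bound (A : Matrix (Fin 3) (Fin 3) ℂ) (hA : A.PosSemidef) (ht : A.trace = 1)
    (i j : Fin 3) : ‖A i j‖ ≤ 3 := by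
  obtain ⟨B, rfl⟩ : ∃ B : Matrix (Fin 3) (Fin 3) ℂ, A = Bᴴ * B := by
    open scoped MatrixOrder in
    exact CStarAlgebra.nonneg_iff_eq_star_mul_self.1 (Matrix.nonneg_iff_posSemidef.2 hA)
  have h1 : ∑ b, ∑ a, ‖B a b‖ ^ 2 = 1 := by
    apply Complex.ofReal_injective
    push_cast
    rw [← ht]
    simp only [Matrix.trace, Matrix.diag, Matrix.mul_apply, conjTranspose_apply]
    refine Finset.sum_congr rfl fun b _ => Finset.sum_congr rfl fun a _ => ?_
    exact (Complex.conj_mul' _).symm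
  have h2 : ∀ a b, ‖B a b‖ ≤ 1 := by
    intro a b
    have h3 : ‖B a b‖ ^ 2 ≤ 1 := by
      rw [← h1]
      refine le_trans ?_ (Finset.single_le_sum (f := fun b => ∑ a, ‖B a b‖ ^ 2) (fun b _ => by positivity) (Finset.mem_univ b))
      exact Finset.single_le_sum (f := fun a => ‖B a b‖ ^ 2) (fun a _ => by positivity) (Finset.mem_univ a)
    nlinarith [norm_nonneg (B a b)]
  rw [Matrix.mul_apply]
  refine (norm_sum_le _ _).trans ?_
  calc ∑ k, ‖Bᴴ i k * B k j‖ ≤ ∑ k : Fin 3, (1 : ℝ) := by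
        refine Finset.sum_le_sum fun k _ => ?_
        rw [norm_mul, conjTranspose_apply, norm_star]
        exact mul_le_one₀ (h2 _ _) (norm_nonneg _) (h2 _ _)
    _ = 3 := by simp

lemma P1_closed : IsClosed P1 := by
  have : P1 = (⋂ i, (fun M : Fin 3 → Matrix (Fin 3) (Fin 3) ℂ => M i) ⁻¹' {A | A.PosSemidef}) ∩
      ({M | ∑ i, M i = 1} ∩ ⋂ i, {M | (M i).trace = 1}) := by
    ext M
    simp [P1, IsPOVM, and_assoc]
  rw [this]
  refine (isClosed_iInter fun i => psd_closed.preimage (continuous_apply i)).inter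
    ((isClosed_eq (by fun_prop) (by fun_prop)).inter (isClosed_iInter fun i => ?_))
  exact isClosed_eq (by fun_prop) (by fun_prop)

lemma P1_compact : IsCompact P1 := by
  have hK : IsCompact (Set.pi Set.univ fun _ : Fin 3 => Set.pi Set.univ fun _ : Fin 3 =>
      Set.pi Set.univ fun _ : Fin 3 => Metric.closedBall (0 : ℂ) 3) :=
    isCompact_univ_pi fun _ => isCompact_univ_pi fun _ => isCompact_univ_pi fun _ =>
      isCompact_closedBall _ _
  refine IsCompact.of_isClosed_subset hK P1_closed ?_
  intro M hM i _ a _ b _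
  simpa using psd_bound (M i) (hM.1.1 i) (hM.2 i) a b

lemma rop_compact : IsCompact RankOneProjective := by
  have : RankOneProjective = P1 ∩ ⋂ i, {M : Fin 3 → Matrix (Fin 3) (Fin 3) ℂ | M i * M i = M i} := by
    ext M
    simp only [RankOneProjective, P1, Set.mem_ofPred_eq, Set.mem_inter_iff, Set.mem_iInter]
    exact ⟨fun h => ⟨⟨h.1, fun i => (h.2 i).2.2⟩, fun i => (h.2 i).2.1⟩,
      fun h => ⟨h.1.1, fun i => ⟨(h.1.1.1 i).isHermitian, h.2 i, h.1.2 i⟩⟩⟩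
  rw [this]
  refine P1_compact.inter_right (isClosed_iInter fun i => ?_)
  exact isClosed_eq (by fun_prop) (by fun_prop)

lemma P1_convex : Convex ℝ P1 := by
  intro M hM N hN a b ha hb hab
  have ha' : (0 : ℂ) ≤ a := by exact_mod_cast ha
  have hb' : (0 : ℂ) ≤ b := by exact_mod_cast hb
  have hab' : (a : ℂ) + b = 1 := by exact_mod_cast hab
  refine ⟨⟨fun i => ?_, ?_⟩, fun i => ?_⟩
  · exact ((hM.1.1 i).smul ha).add ((hN.1.1 i).smul hb)
  · simp only [Pi.add_apply, Pi.smul_apply, Finset.sum_add_distrib, ← Finset.smul_sum, hM.1.2,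
      hN.1.2, ← add_smul, hab, one_smul]
  · simp [hM.2, hN.2, hab']

lemma P1_hull (M) (hM : M ∈ P1) : M ∈ convexHull ℝ RankOneProjective := by
  haveI : LocallyConvexSpace ℝ (Matrix (Fin 3) (Fin 3) ℂ) :=
    inferInstanceAs (LocallyConvexSpace ℝ (Fin 3 → Fin 3 → ℂ))
  rw [← closure_convexHull_extremePoints P1_compact P1_convex] at hM
  exact closure_minimal (convexHull_mono extreme_sub) (compact_convexHull rop_compact).isClosed hM

theorem extremePoints_P1 :
    (∀ M ∈ Set.extremePoints ℝ P1,
      ∃ ψ : Fin 3 → (Fin 3 → ℂ),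
        (∀ i j, star (ψ i) ⬝ᵥ ψ j = if i = j then 1 else 0) ∧
        ∀ i, M i = Matrix.vecMulVec (ψ i) (star (ψ i))) ∧
    (∀ M ∈ P1, M ∈ convexHull ℝ RankOneProjective) := by
  exact ⟨extreme_pure, P1_hull⟩
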